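/- Let (q1,p1,q2,p2) be a rational solution of A5^(2)(α0,α1,α2,α3) and let c ∈ ℂ with c ≠ 0. Then there exist integers m and n such that the functions t ↦ q1(t) − m·c/(t−c) and t ↦ q2(t) − n·c/(t−c) have no pole at c. In particular, q1 and q2 have a pole of order at most one at every nonzero point of ℂ, and any such pole is simple with residue an integer multiple of c. -/

import Mathlib

open Filter Topology Polynomial

/-- Evaluation of a rational function with complex coefficients at a point,
using its reduced numerator and denominator. -/
noncomputable def evR (f : RatFunc ℂ) (t : ℂ) : ℂ := f.num.eval t / f.denom.eval t

/-- A rational function has no pole at `c` if its reduced denominator does not vanish at `c`. -/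
def NoPoleAt (f : RatFunc ℂ) (c : ℂ) : Prop := f.denom.eval c ≠ 0

/-- `(q1, p1, q2, p2)` is a rational solution of the Sasano system
`A5^(2)(α0, α1, α2, α3)` (the parameter `α2` does not occur in the equations):
the four differential equations hold at every point `t ∈ ℂ` which is not a pole
of any of `q1, p1, q2, p2`. -/
def IsSasanoSol (a0 a1 a3 : ℂ) (q1 p1 q2 p2 : RatFunc ℂ) : Prop :=
  ∀ t : ℂ, NoPoleAt q1 t → NoPoleAt p1 t → NoPoleAt q2 t → NoPoleAt p2 t →
    (t * deriv (evR q1) t =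
      2 * (evR q1 t) ^ 2 * evR p1 t - (evR q1 t) ^ 2 + (a0 + a1 + a3) * evR q1 t
        - t + 4 * t * evR p2 t + 2 * evR q1 t * evR q2 t * evR p2 t) ∧
    (t * deriv (evR p1) t =
      -2 * evR q1 t * (evR p1 t) ^ 2 + 2 * evR q1 t * evR p1 t
        - (a0 + a1 + a3) * evR p1 t + a0 - 2 * evR p1 t * evR q2 t * evR p2 t) ∧
    (t * deriv (evR q2) t =
      2 * (evR q2 t) ^ 2 * evR p2 t - (evR q2 t) ^ 2 + (a0 + a1 + a3) * evR q2 t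
        - t + 4 * t * evR p1 t + 2 * evR q1 t * evR p1 t * evR q2 t) ∧
    (t * deriv (evR p2) t =
      -2 * evR q2 t * (evR p2 t) ^ 2 + 2 * evR q2 t * evR p2 t
        - (a0 + a1 + a3) * evR p2 t + a1 - 2 * evR q1 t * evR p1 t * evR p2 t)

/-!
Carry `w = 2 (q1 p1 + q2 p2) + α0 + α1 + α3` as a fifth unknown: the equations for `q1` and `q2` are
then Riccati-like with a linear term in `p2` and `p1`, and those for `p1` and `p2` are linear with
coefficients `2 q1 - w` and `2 q2 - w`. If `q1`, `q2`, `w` have order at least `k < -1` at `c ≠ 0`,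
the derivatives do not contribute at the lowest order, and comparing leading coefficients shows that
all three vanish; so the three functions have at most simple poles. Let `x1`, `x2`, `y` be the
residues. A leading coefficient of `pᵢ` at order `n ≤ 0` is nonzero only if `2 xᵢ - y = n c`. If
`p1` has a double pole, then `x1 = 0`, `y = 2 c` and the next coefficients leave
`x2 ∈ {c, 4 c, -c}`; the case of `p2` is symmetric. Otherwise `xᵢ ∈ {0, y + c}`, and `y` is an
integer multiple of `c`: if not, the indicial relation forces both `pᵢ` to vanish at `c`, hence `w`
has no pole and `y = 0`.
-/

theorem of_succ_of_lt {P : ℤ → Prop} {m n : ℤ} (hmn : m ≤ n) (hm : P m)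
    (hsucc : ∀ k < n, P k → P (k + 1)) : P n := by
  suffices ∀ k, m ≤ k → k ≤ n → P k from this n hmn le_rfl
  intro k hk
  induction k, hk using Int.leInduction with
  | base => exact fun _ ↦ hm
  | succ k _ ih => exact fun hkn ↦ hsucc k (by omega) (ih (by omega))

section Germs

variable {𝕜 : Type*} [NontriviallyNormedField 𝕜] {f g : 𝕜 → 𝕜} {a b c : 𝕜} {m n : ℤ}

/-- `HasLeadingTermAt f c n a` says that `f t = (t - c) ^ n * (a + O(t - c))` near `c`, with an
analytic cofactor. The coefficient `a` may vanish, so `n` is only a lower bound for the order of `f`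
at `c`: statements about pole orders and about Laurent coefficients share this one notion. -/
def HasLeadingTermAt (f : 𝕜 → 𝕜) (c : 𝕜) (n : ℤ) (a : 𝕜) : Prop :=
  ∃ F : 𝕜 → 𝕜, AnalyticAt 𝕜 F c ∧ F c = a ∧ f =ᶠ[𝓝[≠] c] fun t ↦ (t - c) ^ n * F t

theorem eventually_sub_ne_zero (c : 𝕜) : ∀ᶠ t in 𝓝[≠] c, t - c ≠ 0 :=
  eventually_mem_nhdsWithin.mono fun _ ↦ sub_ne_zero.2

namespace HasLeadingTermAt

theorem of_analyticAt (hf : AnalyticAt 𝕜 f c) : HasLeadingTermAt f c 0 (f c) :=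
  ⟨f, hf, rfl, by simp⟩

theorem congr (h : HasLeadingTermAt f c n a) (hfg : f =ᶠ[𝓝[≠] c] g) : HasLeadingTermAt g c n a :=
  let ⟨F, hF, hFc, hfF⟩ := h
  ⟨F, hF, hFc, hfg.symm.trans hfF⟩

theorem unique (ha : HasLeadingTermAt f c n a) (hb : HasLeadingTermAt f c n b) : a = b := by
  obtain ⟨F, hF, rfl, hfF⟩ := ha
  obtain ⟨G, hG, rfl, hfG⟩ := hb
  have hFG : F =ᶠ[𝓝[≠] c] G := by
    filter_upwards [hfF, hfG, eventually_sub_ne_zero c] with t hF hG ht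
    exact mul_left_cancel₀ (zpow_ne_zero n ht) (hF.symm.trans hG)
  exact tendsto_nhds_unique
    ((hF.continuousAt.tendsto.mono_left nhdsWithin_le_nhds).congr' hFG)
    (hG.continuousAt.tendsto.mono_left nhdsWithin_le_nhds)

theorem const (a c : 𝕜) : HasLeadingTermAt (fun _ ↦ a) c 0 a :=
  of_analyticAt analyticAt_const

theorem id (c : 𝕜) : HasLeadingTermAt (fun t ↦ t) c 0 c :=
  of_analyticAt analyticAt_id

theorem add (hf : HasLeadingTermAt f c n a) (hg : HasLeadingTermAt g c n b) :
    HasLeadingTermAt (fun t ↦ f t + g t) c n (a + b) := by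
  obtain ⟨F, hF, rfl, hfF⟩ := hf
  obtain ⟨G, hG, rfl, hgG⟩ := hg
  refine ⟨F + G, hF.add hG, rfl, ?_⟩
  filter_upwards [hfF, hgG] with t hf hg
  rw [hf, hg, Pi.add_apply, mul_add]

theorem mul (hf : HasLeadingTermAt f c m a) (hg : HasLeadingTermAt g c n b) :
    HasLeadingTermAt (fun t ↦ f t * g t) c (m + n) (a * b) := by
  obtain ⟨F, hF, rfl, hfF⟩ := hf
  obtain ⟨G, hG, rfl, hgG⟩ := hg
  refine ⟨F * G, hF.mul hG, rfl, ?_⟩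
  filter_upwards [hfF, hgG, eventually_sub_ne_zero c] with t hf hg ht
  rw [hf, hg, zpow_add₀ ht, Pi.mul_apply, mul_mul_mul_comm]

theorem const_mul (k : 𝕜) (hf : HasLeadingTermAt f c n a) :
    HasLeadingTermAt (fun t ↦ k * f t) c n (k * a) := by
  simpa using (const k c).mul hf

theorem id_mul (hf : HasLeadingTermAt f c n a) :
    HasLeadingTermAt (fun t ↦ t * f t) c n (c * a) := by
  simpa using (HasLeadingTermAt.id c).mul hf

theorem sub (hf : HasLeadingTermAt f c n a) (hg : HasLeadingTermAt g c n b) :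
    HasLeadingTermAt (fun t ↦ f t - g t) c n (a - b) := by
  simpa [sub_eq_add_neg] using hf.add (hg.const_mul (-1))

theorem of_lt (hf : HasLeadingTermAt f c n a) (hmn : m < n) : HasLeadingTermAt f c m 0 := by
  obtain ⟨F, hF, rfl, hfF⟩ := hf
  obtain ⟨k, rfl⟩ : ∃ k : ℕ, n = m + (k + 1) := ⟨(n - m - 1).toNat, by omega⟩
  refine ⟨fun t ↦ (t - c) ^ (k + 1) * F t, by fun_prop, by simp, ?_⟩
  filter_upwards [hfF, eventually_sub_ne_zero c] with t hf ht
  rw [hf, zpow_add₀ ht, mul_assoc]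
  norm_cast

theorem of_le (hf : HasLeadingTermAt f c n a) (hmn : m ≤ n) :
    HasLeadingTermAt f c m (if m = n then a else 0) := by
  split_ifs with h
  · exact h ▸ hf
  · exact hf.of_lt (lt_of_le_of_ne hmn h)

theorem exists_succ (hf : HasLeadingTermAt f c n 0) : ∃ b, HasLeadingTermAt f c (n + 1) b := by
  obtain ⟨F, ⟨p, hp⟩, hFc, hfF⟩ := hf
  refine ⟨_, dslope F c, ⟨_, hp.has_fpower_series_dslope_fslope⟩, rfl, ?_⟩
  filter_upwards [hfF, eventually_sub_ne_zero c] with t hf ht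
  have hF : (t - c) * dslope F c t = F t := by simpa [hFc] using sub_smul_dslope F c t
  rw [hf, zpow_add_one₀ ht, mul_assoc, hF]

theorem deriv [CompleteSpace 𝕜] (hf : HasLeadingTermAt f c n a) :
    HasLeadingTermAt (deriv f) c (n - 1) (n * a) := by
  obtain ⟨F, hF, rfl, hfF⟩ := hf
  have := hF.deriv
  refine ⟨fun t ↦ n * F t + (t - c) * _root_.deriv F t, by fun_prop, by simp, ?_⟩
  filter_upwards [hfF.nhdsNE_deriv, eventually_sub_ne_zero c,
    hF.eventually_analyticAt.filter_mono nhdsWithin_le_nhds] with t hf ht hFt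
  have hpow : HasDerivAt (fun s ↦ (s - c) ^ n) (n * (t - c) ^ (n - 1)) t :=
    (hasDerivAt_zpow n (t - c) (.inl ht)).comp_sub_const t c
  rw [hf, (hpow.fun_mul hFt.differentiableAt.hasDerivAt).deriv, zpow_sub_one₀ ht]
  field_simp

theorem exists_of_meromorphicAt (hf : MeromorphicAt f c) : ∃ n a, HasLeadingTermAt f c n a := by
  obtain ⟨n, hn⟩ := hf
  refine ⟨-n, _, _, hn, rfl, ?_⟩
  filter_upwards [eventually_sub_ne_zero c] with t ht
  have := pow_ne_zero n ht
  simp [this]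

theorem exists_of_forall_lt (hf : MeromorphicAt f c)
    (h : ∀ k < n, ∀ a, HasLeadingTermAt f c k a → a = 0) : ∃ a, HasLeadingTermAt f c n a := by
  obtain ⟨m, a, hm⟩ := exists_of_meromorphicAt hf
  refine of_succ_of_lt (P := fun k ↦ ∃ a, HasLeadingTermAt f c k a)
    (min_le_right m n) ⟨_, hm.of_le (min_le_left m n)⟩ fun k hk ⟨b, hb⟩ ↦ ?_
  obtain rfl := h k hk b hb
  exact hb.exists_succ

end HasLeadingTermAt

theorem mem_zmultiples_of_two_mul_sub_eq {x y : 𝕜} (hx : x = 0 ∨ x = y + c)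
    (hxy : 2 * x - y = n * c) : y ∈ AddSubgroup.zmultiples c := by
  rw [AddSubgroup.mem_zmultiples_iff]
  rcases hx with rfl | rfl
  · exact ⟨-n, by simp; linear_combination hxy⟩
  · exact ⟨n - 2, by simp; linear_combination -hxy⟩

/-- A meromorphic germ at `c` solving the Sasano system, written with `A = α0 + α1 + α3`. The
expression `w = 2 (q1 p1 + q2 p2) + A` common to the four equations is carried as a fifth unknown,
so that exchanging the indices `1` and `2` leaves it unchanged. -/
structure IsSasanoGerm (c a0 a1 A : 𝕜) (q1 p1 q2 p2 w : 𝕜 → 𝕜) : Prop where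
  meromorphicAt_q1 : MeromorphicAt q1 c
  meromorphicAt_p1 : MeromorphicAt p1 c
  meromorphicAt_q2 : MeromorphicAt q2 c
  meromorphicAt_p2 : MeromorphicAt p2 c
  q1_eq : ∀ᶠ t in 𝓝[≠] c, t * deriv q1 t = q1 t * w t - q1 t * q1 t - t + 4 * (t * p2 t)
  p1_eq : ∀ᶠ t in 𝓝[≠] c, t * deriv p1 t = (2 * q1 t - w t) * p1 t + a0
  q2_eq : ∀ᶠ t in 𝓝[≠] c, t * deriv q2 t = q2 t * w t - q2 t * q2 t - t + 4 * (t * p1 t)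
  p2_eq : ∀ᶠ t in 𝓝[≠] c, t * deriv p2 t = (2 * q2 t - w t) * p2 t + a1
  w_eq : ∀ᶠ t in 𝓝[≠] c, w t = 2 * (q1 t * p1 t + q2 t * p2 t) + A

namespace IsSasanoGerm

variable {a0 a1 A x x1 x2 y P P1 P2 : 𝕜} {q1 p1 q2 p2 w : 𝕜 → 𝕜} {i j k l d : ℤ}

theorem symm (h : IsSasanoGerm c a0 a1 A q1 p1 q2 p2 w) :
    IsSasanoGerm c a1 a0 A q2 p2 q1 p1 w where
  meromorphicAt_q1 := h.meromorphicAt_q2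
  meromorphicAt_p1 := h.meromorphicAt_p2
  meromorphicAt_q2 := h.meromorphicAt_q1
  meromorphicAt_p2 := h.meromorphicAt_p1
  q1_eq := h.q2_eq
  p1_eq := h.p2_eq
  q2_eq := h.q1_eq
  p2_eq := h.p1_eq
  w_eq := h.w_eq.mono fun t ht ↦ by rw [ht, add_comm (q1 t * p1 t)]

theorem meromorphicAt_w (h : IsSasanoGerm c a0 a1 A q1 p1 q2 p2 w) : MeromorphicAt w c := by
  have := h.meromorphicAt_q1
  have := h.meromorphicAt_p1
  have := h.meromorphicAt_q2
  have := h.meromorphicAt_p2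
  have : MeromorphicAt (fun t ↦ 2 * (q1 t * p1 t + q2 t * p2 t) + A) c := by fun_prop
  exact this.congr (EventuallyEq.symm h.w_eq)

theorem coeff_w_eq (h : IsSasanoGerm c a0 a1 A q1 p1 q2 p2 w)
    (hq1 : HasLeadingTermAt q1 c i x1) (hp1 : HasLeadingTermAt p1 c j P1)
    (hq2 : HasLeadingTermAt q2 c k x2) (hp2 : HasLeadingTermAt p2 c l P2)
    (hw : HasLeadingTermAt w c m y) (hij : i + j = d) (hkl : k + l = d) (hdm : d ≤ m)
    (hd : d < 0) :
    2 * (x1 * P1 + x2 * P2) = if d = m then y else 0 := by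
  have hrhs := ((((hij ▸ hq1.mul hp1).add (hkl ▸ hq2.mul hp2)).const_mul 2).add
    ((HasLeadingTermAt.const A c).of_lt hd)).congr (EventuallyEq.symm h.w_eq)
  simpa using hrhs.unique (hw.of_le hdm)

variable [CompleteSpace 𝕜]

theorem coeff_p1_eq (h : IsSasanoGerm c a0 a1 A q1 p1 q2 p2 w)
    (hq1 : HasLeadingTermAt q1 c k x) (hw : HasLeadingTermAt w c k y)
    (hp1 : HasLeadingTermAt p1 c n P) (hk : k ≤ -1) (hkn : k + n < 0) :
    (2 * x - y) * P = if k = -1 then c * (n * P) else 0 := by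
  have hrhs := ((((hq1.const_mul 2).sub hw).mul hp1).add
    ((HasLeadingTermAt.const a0 c).of_lt hkn)).congr (EventuallyEq.symm h.p1_eq)
  have hiff : k + n = n - 1 ↔ k = -1 := by omega
  simpa [hiff] using hrhs.unique (hp1.deriv.id_mul.of_le (by omega))

theorem coeff_q1_eq (h : IsSasanoGerm c a0 a1 A q1 p1 q2 p2 w)
    (hq1 : HasLeadingTermAt q1 c i x) (hw : HasLeadingTermAt w c k y)
    (hp2 : HasLeadingTermAt p2 c d P)
    (hd : d ≤ 0) (hdi : d ≤ i - 1) (hdik : d ≤ i + k) (hdii : d ≤ i + i) :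
    (if d = i - 1 then c * (i * x) else 0) =
      (if d = i + k then x * y else 0) - (if d = i + i then x * x else 0) -
        (if d = 0 then c else 0) + 4 * (c * P) :=
  (hq1.deriv.id_mul.of_le hdi).unique <|
    (((((hq1.mul hw).of_le hdik).sub ((hq1.mul hq1).of_le hdii)).sub
      ((HasLeadingTermAt.id c).of_le hd)).add (hp2.id_mul.const_mul 4)).congr
        (EventuallyEq.symm h.q1_eq)

theorem exists_leadingTerm_p1_neg (h : IsSasanoGerm c a0 a1 A q1 p1 q2 p2 w)
    (hq1 : HasLeadingTermAt q1 c k x) (hw : HasLeadingTermAt w c k y) (hk : k < -1)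
    (hxy : 2 * x - y ≠ 0) : ∃ P, HasLeadingTermAt p1 c (-k) P :=
  HasLeadingTermAt.exists_of_forall_lt h.meromorphicAt_p1 fun n hn P hp1 ↦ by
    simpa [hk.ne, hxy] using h.coeff_p1_eq hq1 hw hp1 hk.le (by omega)

theorem coeff_p1_indicial_eq (h : IsSasanoGerm c a0 a1 A q1 p1 q2 p2 w)
    (hq1 : HasLeadingTermAt q1 c (-1) x) (hw : HasLeadingTermAt w c (-1) y)
    (hp1 : HasLeadingTermAt p1 c n P) (hn : n < 1) : (2 * x - y - n * c) * P = 0 := by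
  have := h.coeff_p1_eq hq1 hw hp1 le_rfl (by omega)
  rw [if_pos rfl] at this
  linear_combination this

theorem exists_leadingTerm_p1_one (h : IsSasanoGerm c a0 a1 A q1 p1 q2 p2 w)
    (hq1 : HasLeadingTermAt q1 c (-1) x) (hw : HasLeadingTermAt w c (-1) y)
    (hx : x = 0 ∨ x = y + c) (hy : y ∉ AddSubgroup.zmultiples c) :
    ∃ P, HasLeadingTermAt p1 c 1 P :=
  HasLeadingTermAt.exists_of_forall_lt h.meromorphicAt_p1 fun n hn P hp1 ↦ by
    refine (mul_eq_zero.1 (h.coeff_p1_indicial_eq hq1 hw hp1 hn)).resolve_left fun hxy ↦ ?_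
    exact hy (mem_zmultiples_of_two_mul_sub_eq hx (sub_eq_zero.1 hxy))

theorem residue_w_mem_zmultiples (h : IsSasanoGerm c a0 a1 A q1 p1 q2 p2 w)
    (hq1 : HasLeadingTermAt q1 c (-1) x1) (hq2 : HasLeadingTermAt q2 c (-1) x2)
    (hw : HasLeadingTermAt w c (-1) y) (hx1 : x1 = 0 ∨ x1 = y + c) (hx2 : x2 = 0 ∨ x2 = y + c) :
    y ∈ AddSubgroup.zmultiples c := by
  by_contra hy
  obtain ⟨P1, hp1⟩ := h.exists_leadingTerm_p1_one hq1 hw hx1 hy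
  obtain ⟨P2, hp2⟩ := h.symm.exists_leadingTerm_p1_one hq2 hw hx2 hy
  have hy_zero := h.coeff_w_eq hq1 (hp1.of_lt zero_lt_one) hq2 (hp2.of_lt zero_lt_one) hw
    rfl rfl le_rfl (by norm_num)
  obtain rfl : y = 0 := by simpa using hy_zero.symm
  exact hy (zero_mem _)

variable [CharZero 𝕜]

theorem exists_leadingTerm_p2 (h : IsSasanoGerm c a0 a1 A q1 p1 q2 p2 w) (hc : c ≠ 0)
    (hq1 : HasLeadingTermAt q1 c k x) (hw : HasLeadingTermAt w c k y) (hk : k ≤ -1) :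
    ∃ P, HasLeadingTermAt p2 c (k + k) P ∧
      4 * c * P = x * (x - y) - if k = -1 then c * x else 0 := by
  obtain ⟨P, hp2⟩ := HasLeadingTermAt.exists_of_forall_lt (n := k + k) h.meromorphicAt_p2
    fun d hd P hp2 ↦ by
      have := h.coeff_q1_eq hq1 hw hp2 (by omega) (by omega) (by omega) (by omega)
      simpa [hc, hd.ne, show d ≠ 0 by omega, show d ≠ k - 1 by omega] using this
  refine ⟨P, hp2, ?_⟩
  have := h.coeff_q1_eq hq1 hw hp2 (by omega) (by omega) (by omega) (by omega)
  rcases hk.lt_or_eq with hk | rfl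
  · simp only [show k + k ≠ k - 1 by omega, show k + k ≠ 0 by omega, hk.ne, if_true,
      if_false] at this ⊢
    linear_combination -this
  · norm_num at this ⊢
    linear_combination -this

theorem coeff_two_mul_q2_sub_w_eq_zero (h : IsSasanoGerm c a0 a1 A q1 p1 q2 p2 w) (hc : c ≠ 0)
    (hq1 : HasLeadingTermAt q1 c k x1) (hq2 : HasLeadingTermAt q2 c k x2)
    (hw : HasLeadingTermAt w c k y) (hk : k < -1) (hx1 : 2 * x1 - y = 0) : 2 * x2 - y = 0 := by
  -- Otherwise `p2` vanishes to order `-k`, so `x1 = y = 0`; the equation for `w` then makes `q1`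
  -- vanish to order `1 - k`, too high for the term `-t` in the equation for `q1`.
  by_contra hx2
  obtain ⟨R, hp2⟩ := h.symm.exists_leadingTerm_p1_neg hq2 hw hk hx2
  obtain ⟨P2, hp2', hP2⟩ := h.exists_leadingTerm_p2 hc hq1 hw hk.le
  obtain ⟨P1, hp1, hP1⟩ := h.symm.exists_leadingTerm_p2 hc hq2 hw hk.le
  simp only [hk.ne, if_false, sub_zero] at hP1 hP2
  have hP2_zero : P2 = 0 := hp2'.unique (hp2.of_lt (by omega))
  have hx1_zero : x1 = 0 := by
    have : x1 * x1 = 0 := by linear_combination hP2 - 4 * c * hP2_zero + x1 * hx1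
    simpa using this
  obtain rfl : y = 0 := by linear_combination 2 * hx1_zero - hx1
  have hx2_ne : x2 ≠ 0 := by simpa using hx2
  have hP1_ne : P1 ≠ 0 := fun hP1_zero ↦ hx2_ne (by simpa [hP1_zero] using hP1.symm)
  obtain ⟨z, hw'⟩ := hw.exists_succ
  have hq1_order : ∃ s, HasLeadingTermAt q1 c (1 - k) s :=
    HasLeadingTermAt.exists_of_forall_lt h.meromorphicAt_q1 fun n hn s hs ↦ by
      have := h.coeff_w_eq hs hp1 hq2 (hp2.of_lt (m := n + k) (by omega)) hw' rfl
        (by omega) (by omega) (by omega)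
      simpa [hP1_ne, show n + (k + k) ≠ k + 1 by omega] using this
  obtain ⟨s, hs⟩ := hq1_order
  have := h.coeff_q1_eq hs hw' (hp2.of_lt (m := 0) (by omega)) le_rfl (by omega) (by omega)
    (by omega)
  simp [hc, show k ≠ 0 by omega, show (0 : ℤ) ≠ 1 - k + (k + 1) by omega,
    show (0 : ℤ) ≠ 1 - k + (1 - k) by omega] at this

theorem leadingCoeffs_eq_zero (h : IsSasanoGerm c a0 a1 A q1 p1 q2 p2 w) (hc : c ≠ 0)
    (hq1 : HasLeadingTermAt q1 c k x1) (hq2 : HasLeadingTermAt q2 c k x2)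
    (hw : HasLeadingTermAt w c k y) (hk : k < -1) : x1 = 0 ∧ x2 = 0 ∧ y = 0 := by
  obtain ⟨P2, hp2, hP2⟩ := h.exists_leadingTerm_p2 hc hq1 hw hk.le
  obtain ⟨P1, hp1, hP1⟩ := h.symm.exists_leadingTerm_p2 hc hq2 hw hk.le
  simp only [hk.ne, if_false, sub_zero] at hP1 hP2
  by_cases hx1 : 2 * x1 - y = 0
  · have hx2 := h.coeff_two_mul_q2_sub_w_eq_zero hc hq1 hq2 hw hk hx1
    have hrel : 2 * (x1 * P1 + x2 * P2) = 0 := by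
      simpa [show k + (k + k) ≠ k by omega] using
        h.coeff_w_eq hq1 hp1 hq2 hp2 hw rfl rfl (by omega) (by omega)
    obtain rfl : y = 2 * x1 := by linear_combination -hx1
    obtain rfl : x2 = x1 := by linear_combination hx2 / 2
    have hx2_zero : x2 ^ 3 = 0 := by
      linear_combination -c * hrel + x2 / 2 * hP1 + x2 / 2 * hP2
    simpa using hx2_zero
  · have hx2 : 2 * x2 - y ≠ 0 := fun hx2 ↦
      hx1 (h.symm.coeff_two_mul_q2_sub_w_eq_zero hc hq2 hq1 hw hk hx2)
    obtain ⟨R1, hR1⟩ := h.exists_leadingTerm_p1_neg hq1 hw hk hx1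
    obtain ⟨R2, hR2⟩ := h.symm.exists_leadingTerm_p1_neg hq2 hw hk hx2
    obtain rfl : P1 = 0 := hp1.unique (hR1.of_lt (by omega))
    obtain rfl : P2 = 0 := hp2.unique (hR2.of_lt (by omega))
    have hy : y = 0 := by
      simpa using (h.coeff_w_eq hq1 (hR1.of_lt (m := 0) (by omega)) hq2
        (hR2.of_lt (m := 0) (by omega)) hw rfl rfl (by omega) (by omega)).symm
    subst hy
    exact ⟨by simpa using hP2.symm, by simpa using hP1.symm, rfl⟩

theorem exists_leadingTerm_neg_one (h : IsSasanoGerm c a0 a1 A q1 p1 q2 p2 w) (hc : c ≠ 0) :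
    ∃ x1 x2 y, HasLeadingTermAt q1 c (-1) x1 ∧ HasLeadingTermAt q2 c (-1) x2 ∧
      HasLeadingTermAt w c (-1) y := by
  obtain ⟨i, _, hq1⟩ := HasLeadingTermAt.exists_of_meromorphicAt h.meromorphicAt_q1
  obtain ⟨j, _, hq2⟩ := HasLeadingTermAt.exists_of_meromorphicAt h.meromorphicAt_q2
  obtain ⟨l, _, hw⟩ := HasLeadingTermAt.exists_of_meromorphicAt h.meromorphicAt_w
  refine of_succ_of_lt (m := min (-1) (min i (min j l))) (P := fun k ↦ ∃ x1 x2 y,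
    HasLeadingTermAt q1 c k x1 ∧ HasLeadingTermAt q2 c k x2 ∧ HasLeadingTermAt w c k y)
    (by simp) ⟨_, _, _, hq1.of_le (by simp), hq2.of_le (by simp), hw.of_le (by simp)⟩ ?_
  rintro k hk ⟨x1, x2, y, hq1, hq2, hw⟩
  obtain ⟨rfl, rfl, rfl⟩ := h.leadingCoeffs_eq_zero hc hq1 hq2 hw hk
  obtain ⟨x1, hx1⟩ := hq1.exists_succ
  obtain ⟨x2, hx2⟩ := hq2.exists_succ
  obtain ⟨y, hy⟩ := hw.exists_succ
  exact ⟨x1, x2, y, hx1, hx2, hy⟩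

theorem exists_leadingTerm_p2_neg_two (h : IsSasanoGerm c a0 a1 A q1 p1 q2 p2 w) (hc : c ≠ 0)
    (hq1 : HasLeadingTermAt q1 c (-1) x) (hw : HasLeadingTermAt w c (-1) y) :
    ∃ P, HasLeadingTermAt p2 c (-2) P ∧ 4 * c * P = x * (x - y - c) := by
  obtain ⟨P, hp2, hP⟩ := h.exists_leadingTerm_p2 hc hq1 hw le_rfl
  rw [if_pos rfl] at hP
  exact ⟨P, hp2, by linear_combination hP⟩

theorem residues_of_coeff_p1_ne_zero (h : IsSasanoGerm c a0 a1 A q1 p1 q2 p2 w) (hc : c ≠ 0)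
    (hq1 : HasLeadingTermAt q1 c (-1) x1) (hq2 : HasLeadingTermAt q2 c (-1) x2)
    (hw : HasLeadingTermAt w c (-1) y) (hp1 : HasLeadingTermAt p1 c (-2) P) (hP : P ≠ 0) :
    x1 = 0 ∧ y = 2 * c := by
  obtain ⟨P1, hp1', hP1⟩ := h.symm.exists_leadingTerm_p2_neg_two hc hq2 hw
  obtain ⟨P2, hp2, hP2⟩ := h.exists_leadingTerm_p2_neg_two hc hq1 hw
  obtain rfl : P1 = P := hp1'.unique hp1
  have hx1 : 2 * x1 - y - (-2 : ℤ) * c = 0 :=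
    (mul_eq_zero.1 (h.coeff_p1_indicial_eq hq1 hw hp1 (by norm_num))).resolve_right hP
  push_cast at hx1
  have hrel : x1 * P1 + x2 * P2 = 0 := by
    simpa using h.coeff_w_eq hq1 hp1 hq2 hp2 hw rfl rfl (by norm_num) (by norm_num)
  have hx1_zero : x1 = 0 := by
    refine (mul_eq_zero.1 (?_ : x1 * P1 = 0)).resolve_right hP
    rcases mul_eq_zero.1 (h.symm.coeff_p1_indicial_eq hq2 hw hp2 (by norm_num)) with
      hx2 | hP2_zero
    · push_cast at hx2
      obtain rfl : x2 = x1 := by linear_combination (hx2 - hx1) / 2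
      obtain rfl : P1 = P2 := mul_left_cancel₀ (a := 4 * c) (by simpa) (hP1.trans hP2.symm)
      linear_combination hrel / 2
    · linear_combination hrel - x2 * hP2_zero
  exact ⟨hx1_zero, by linear_combination 2 * hx1_zero - hx1⟩

theorem four_mul_coeff_p1_eq (h : IsSasanoGerm c a0 a1 A q1 p1 q2 p2 w) (hc : c ≠ 0)
    (hq2 : HasLeadingTermAt q2 c (-1) x) (hw : HasLeadingTermAt w c (-1) (2 * c))
    (hp1 : HasLeadingTermAt p1 c (-2) P) : 4 * c * P = x * (x - 3 * c) := by
  obtain ⟨P', hp1', hP'⟩ := h.symm.exists_leadingTerm_p2_neg_two hc hq2 hw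
  obtain rfl : P = P' := hp1.unique hp1'
  linear_combination hP'

theorem exists_leadingTerm_q1_one_p2_zero (h : IsSasanoGerm c a0 a1 A q1 p1 q2 p2 w) (hc : c ≠ 0)
    (hq1 : HasLeadingTermAt q1 c (-1) 0) (hq2 : HasLeadingTermAt q2 c (-1) x)
    (hw : HasLeadingTermAt w c (-1) (2 * c)) (hp1 : HasLeadingTermAt p1 c (-2) P) :
    ∃ s S, HasLeadingTermAt q1 c 1 s ∧ HasLeadingTermAt p2 c 0 S := by
  have hP := h.four_mul_coeff_p1_eq hc hq2 hw hp1
  obtain ⟨P2, hp2, hP2⟩ := h.exists_leadingTerm_p2_neg_two hc hq1 hw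
  obtain rfl : P2 = 0 := by simpa [hc] using hP2
  obtain ⟨r, hq1⟩ := hq1.exists_succ
  obtain ⟨R, hp2⟩ := hp2.exists_succ
  norm_num at hq1 hp2
  have hr : r = -2 * R := by
    have : 0 = r * (2 * c) + 4 * (c * R) := by
      simpa using h.coeff_q1_eq hq1 hw hp2 (by norm_num) le_rfl le_rfl (by norm_num)
    refine mul_left_cancel₀ (mul_ne_zero two_ne_zero hc) ?_
    linear_combination -this
  have hrel : r * P + x * R = 0 := by
    simpa using h.coeff_w_eq hq1 hp1 hq2 hp2 hw rfl rfl (by norm_num) (by norm_num)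
  have hR_eq : (2 * x - c) * R = 0 := by
    have := h.symm.coeff_p1_indicial_eq hq2 hw hp2 (by norm_num)
    push_cast at this
    linear_combination this
  have hR : R = 0 := by
    by_contra hR
    have hx : 2 * x - c = 0 := (mul_eq_zero.1 hR_eq).resolve_right hR
    have hPx : 2 * P = x := mul_right_cancel₀ hR (by linear_combination P * hr - hrel)
    have : c ^ 2 = 0 := by
      linear_combination 4 / 9 * ((x / 2 - 9 / 4 * c) * hx - 2 * c * hPx + hP)
    exact hc (by simpa using this)
  subst hR
  obtain rfl : r = 0 := by simpa using hr
  obtain ⟨s, hs⟩ := hq1.exists_succ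
  obtain ⟨S, hS⟩ := hp2.exists_succ
  exact ⟨s, S, by simpa using hs, by simpa using hS⟩

theorem residue_q2_mem_zmultiples (h : IsSasanoGerm c a0 a1 A q1 p1 q2 p2 w) (hc : c ≠ 0)
    (hq1 : HasLeadingTermAt q1 c (-1) 0) (hq2 : HasLeadingTermAt q2 c (-1) x)
    (hw : HasLeadingTermAt w c (-1) (2 * c)) (hp1 : HasLeadingTermAt p1 c (-2) P) :
    x ∈ AddSubgroup.zmultiples c := by
  have hP := h.four_mul_coeff_p1_eq hc hq2 hw hp1
  obtain ⟨s, S, hq1, hp2⟩ := h.exists_leadingTerm_q1_one_p2_zero hc hq1 hq2 hw hp1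
  have hS_eq : (x - c) * S = 0 := by
    have := h.symm.coeff_p1_indicial_eq hq2 hw hp2 zero_lt_one
    push_cast at this
    linear_combination this / 2
  rw [AddSubgroup.mem_zmultiples_iff]
  rcases mul_eq_zero.1 hS_eq with hx | rfl
  · exact ⟨1, by simpa using (sub_eq_zero.1 hx).symm⟩
  have hs : s = 1 := by
    have : c * s = s * (2 * c) - c := by
      simpa using h.coeff_q1_eq hq1 hw hp2 le_rfl (by norm_num) (by norm_num) (by norm_num)
    exact mul_left_cancel₀ hc (by linear_combination -this)
  have hPc : P = c := by
    have := h.coeff_w_eq hq1 hp1 hq2 hp2 hw rfl rfl (by norm_num) (by norm_num)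
    simpa [hs] using this
  have : (x - 4 * c) * (x + c) = 0 := by linear_combination 4 * c * hPc - hP
  rcases mul_eq_zero.1 this with hx | hx
  · exact ⟨4, by simpa using (sub_eq_zero.1 hx).symm⟩
  · exact ⟨-1, by simpa using (eq_neg_of_add_eq_zero_left hx).symm⟩

theorem residues_mem_zmultiples (h : IsSasanoGerm c a0 a1 A q1 p1 q2 p2 w) (hc : c ≠ 0)
    (hq1 : HasLeadingTermAt q1 c (-1) x1) (hq2 : HasLeadingTermAt q2 c (-1) x2)
    (hw : HasLeadingTermAt w c (-1) y) :
    x1 ∈ AddSubgroup.zmultiples c ∧ x2 ∈ AddSubgroup.zmultiples c := by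
  obtain ⟨P1, hp1, hP1⟩ := h.symm.exists_leadingTerm_p2_neg_two hc hq2 hw
  obtain ⟨P2, hp2, hP2⟩ := h.exists_leadingTerm_p2_neg_two hc hq1 hw
  by_cases hP1_zero : P1 = 0
  · by_cases hP2_zero : P2 = 0
    · have hx1 : x1 = 0 ∨ x1 = y + c := by
        simpa [hP2_zero, sub_sub, sub_eq_zero] using hP2.symm
      have hx2 : x2 = 0 ∨ x2 = y + c := by
        simpa [hP1_zero, sub_sub, sub_eq_zero] using hP1.symm
      have hy := h.residue_w_mem_zmultiples hq1 hq2 hw hx1 hx2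
      have hmem {x : 𝕜} (hx : x = 0 ∨ x = y + c) : x ∈ AddSubgroup.zmultiples c := by
        rcases hx with rfl | rfl
        exacts [zero_mem _, add_mem hy (AddSubgroup.mem_zmultiples c)]
      exact ⟨hmem hx1, hmem hx2⟩
    · obtain ⟨rfl, rfl⟩ := h.symm.residues_of_coeff_p1_ne_zero hc hq2 hq1 hw hp2 hP2_zero
      exact ⟨h.symm.residue_q2_mem_zmultiples hc hq2 hq1 hw hp2, zero_mem _⟩
  · obtain ⟨rfl, rfl⟩ := h.residues_of_coeff_p1_ne_zero hc hq1 hq2 hw hp1 hP1_zero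
    exact ⟨zero_mem _, h.residue_q2_mem_zmultiples hc hq1 hq2 hw hp1⟩

end IsSasanoGerm

theorem sasano_q1_q2_simple_poles_integer_residues_general [CompleteSpace 𝕜] [CharZero 𝕜]
    {a0 a1 A : 𝕜} {q1 p1 q2 p2 w : 𝕜 → 𝕜} (h : IsSasanoGerm c a0 a1 A q1 p1 q2 p2 w) (hc : c ≠ 0) :
    ∃ m n : ℤ, HasLeadingTermAt q1 c (-1) (m * c) ∧ HasLeadingTermAt q2 c (-1) (n * c) := by
  obtain ⟨x1, x2, y, hq1, hq2, hw⟩ := h.exists_leadingTerm_neg_one hc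
  obtain ⟨⟨m, rfl⟩, ⟨n, rfl⟩⟩ := h.residues_mem_zmultiples hc hq1 hq2 hw
  exact ⟨m, n, by simpa using hq1, by simpa using hq2⟩

end Germs

section RatFunc

variable {f g q : RatFunc ℂ} {t c r : ℂ}

theorem eventually_noPoleAt (f : RatFunc ℂ) (c : ℂ) : ∀ᶠ t in 𝓝[≠] c, NoPoleAt f t := by
  have hfin : ∀ᶠ t in cofinite, NoPoleAt f t :=
    eventually_cofinite.2 (by simpa [NoPoleAt] using finite_setOfPred_isRoot f.denom_ne_zero)
  exact hfin.filter_mono (nhdsNE_le_cofinite c)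

theorem evR_algebraMap (p : ℂ[X]) (t : ℂ) :
    evR (algebraMap ℂ[X] (RatFunc ℂ) p) t = p.eval t := by
  simp [evR]

theorem evR_add (hf : NoPoleAt f t) (hg : NoPoleAt g t) : evR (f + g) t = evR f t + evR g t :=
  RatFunc.eval_add (.id ℂ) t hf hg

theorem evR_mul (hf : NoPoleAt f t) (hg : NoPoleAt g t) : evR (f * g) t = evR f t * evR g t :=
  RatFunc.eval_mul (.id ℂ) t hf hg

theorem analyticAt_eval (p : ℂ[X]) (c : ℂ) : AnalyticAt ℂ (fun t ↦ p.eval t) c :=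
  AnalyticOnNhd.eval_polynomial p c trivial

theorem meromorphicAt_evR (f : RatFunc ℂ) (c : ℂ) : MeromorphicAt (evR f) c :=
  (analyticAt_eval f.num c).meromorphicAt.fun_div (analyticAt_eval f.denom c).meromorphicAt

theorem noPoleAt_of_hasLeadingTermAt (hf : HasLeadingTermAt (evR f) c 0 r) : NoPoleAt f c := by
  intro hdenom
  have hnum : HasLeadingTermAt (fun t ↦ f.num.eval t) c 0 (r * f.denom.eval c) := by
    refine (hf.mul (.of_analyticAt (analyticAt_eval f.denom c))).congr ?_
    filter_upwards [eventually_noPoleAt f c] with t ht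
    exact div_mul_cancel₀ _ ht
  have hnum_zero : f.num.eval c = 0 := by
    simpa [hdenom] using (HasLeadingTermAt.of_analyticAt (analyticAt_eval f.num c)).unique hnum
  obtain ⟨u, v, huv⟩ := RatFunc.isCoprime_num_denom f
  simpa [hdenom, hnum_zero] using congrArg (Polynomial.eval c) huv

theorem eventually_evR_sub_div (q : RatFunc ℂ) (c r : ℂ) :
    ∀ᶠ t in 𝓝[≠] c, evR (q - RatFunc.C r / (RatFunc.X - RatFunc.C c)) t =
      evR q t - (t - c) ^ (-1 : ℤ) * r := by
  set g := q - RatFunc.C r / (RatFunc.X - RatFunc.C c) with hg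
  set l := algebraMap ℂ[X] (RatFunc ℂ) (X - C c) with hl
  have hl_ne : l ≠ 0 := RatFunc.algebraMap_ne_zero (X_sub_C_ne_zero c)
  have hlq : l * q = l * g + algebraMap ℂ[X] (RatFunc ℂ) (C r) := by
    simp only [hl, hg, map_sub, RatFunc.algebraMap_X, RatFunc.algebraMap_C] at hl_ne ⊢
    field_simp
    ring
  filter_upwards [eventually_noPoleAt q c, eventually_noPoleAt g c, eventually_noPoleAt l c,
    eventually_noPoleAt (l * g) c, eventually_noPoleAt (algebraMap ℂ[X] _ (C r)) c,
    eventually_sub_ne_zero c] with t hqt hgt hlt hlgt hrt htc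
  have := congrArg (evR · t) hlq
  rw [evR_mul hlt hqt, evR_add hlgt hrt, evR_mul hlt hgt, hl, evR_algebraMap, evR_algebraMap,
    eval_sub, eval_X, eval_C, eval_C] at this
  field_simp
  linear_combination -this

theorem noPoleAt_sub_div_of_hasLeadingTermAt (hq : HasLeadingTermAt (evR q) c (-1) r) :
    NoPoleAt (q - RatFunc.C r / (RatFunc.X - RatFunc.C c)) c := by
  have hpole : HasLeadingTermAt (fun t ↦ (t - c) ^ (-1 : ℤ) * r) c (-1) r :=
    ⟨fun _ ↦ r, analyticAt_const, rfl, .rfl⟩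
  have := (hq.sub hpole).congr (EventuallyEq.symm (eventually_evR_sub_div q c r))
  rw [sub_self] at this
  obtain ⟨b, hb⟩ := this.exists_succ
  exact noPoleAt_of_hasLeadingTermAt hb

theorem IsSasanoSol.isSasanoGerm {a0 a1 a3 : ℂ} {q1 p1 q2 p2 : RatFunc ℂ}
    (h : IsSasanoSol a0 a1 a3 q1 p1 q2 p2) (c : ℂ) :
    IsSasanoGerm c a0 a1 (a0 + a1 + a3) (evR q1) (evR p1) (evR q2) (evR p2)
      fun t ↦ 2 * (evR q1 t * evR p1 t + evR q2 t * evR p2 t) + (a0 + a1 + a3) := by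
  have hnoPole : ∀ᶠ t in 𝓝[≠] c, NoPoleAt q1 t ∧ NoPoleAt p1 t ∧ NoPoleAt q2 t ∧ NoPoleAt p2 t :=
    (eventually_noPoleAt q1 c).and <| (eventually_noPoleAt p1 c).and <|
      (eventually_noPoleAt q2 c).and (eventually_noPoleAt p2 c)
  have hsol := hnoPole.mono fun t ⟨hq1, hp1, hq2, hp2⟩ ↦ h t hq1 hp1 hq2 hp2
  exact
    { meromorphicAt_q1 := meromorphicAt_evR q1 c
      meromorphicAt_p1 := meromorphicAt_evR p1 c
      meromorphicAt_q2 := meromorphicAt_evR q2 c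
      meromorphicAt_p2 := meromorphicAt_evR p2 c
      q1_eq := hsol.mono fun t ⟨h, _⟩ ↦ by linear_combination h
      p1_eq := hsol.mono fun t ⟨_, h, _⟩ ↦ by linear_combination h
      q2_eq := hsol.mono fun t ⟨_, _, h, _⟩ ↦ by linear_combination h
      p2_eq := hsol.mono fun t ⟨_, _, _, h⟩ ↦ by linear_combination h
      w_eq := .of_forall fun _ ↦ rfl }

end RatFunc

theorem sasano_q1_q2_simple_poles_integer_residues (a0 a1 a2 a3 : ℂ)
    (hpar : a0 + a1 + 2 * a2 + a3 = 1 / 2)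
    (q1 p1 q2 p2 : RatFunc ℂ)
    (hsol : IsSasanoSol a0 a1 a3 q1 p1 q2 p2)
    (c : ℂ) (hc : c ≠ 0) :
    ∃ m n : ℤ,
      NoPoleAt (q1 - RatFunc.C ((m : ℂ) * c) / (RatFunc.X - RatFunc.C c)) c ∧
      NoPoleAt (q2 - RatFunc.C ((n : ℂ) * c) / (RatFunc.X - RatFunc.C c)) c := by
  obtain ⟨m, n, hq1, hq2⟩ :=
    sasano_q1_q2_simple_poles_integer_residues_general (hsol.isSasanoGerm c) hc
  exact ⟨m, n, noPoleAt_sub_div_of_hasLeadingTermAt hq1, noPoleAt_sub_div_of_hasLeadingTermAt hq2⟩
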